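/- Let $N \ge 2$ and let $\nu$ be a positive Borel measure on $\mathbb{R}^N$ such that $\nu(B(x,r)) \le C_1 r^{N-1}$ for all $x \in \mathbb{R}^N$ and $r > 0$. Then for every $u \in C_c^\infty(\mathbb{R}^N)$ and every integer $m \ge 1$, $\int_{\mathbb{R}^N} |D^{m-1}u(x)|\, d\nu(x) \le C\, C_1\, \|D^m u\|_{L^1(\mathbb{R}^N)}$, where $D^k u$ denotes the collection of all $k$-th order partial derivatives and $C$ depends only on $N$ and $m$. -/

import Mathlib

open MeasureTheory Metric ENNReal

section Helpers

variable {E : Type*} [NormedAddCommGroup E] [NormedSpace ℝ E] [MeasurableSpace E] [BorelSpace E]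
  [FiniteDimensional ℝ E] (μ : Measure E) [μ.IsAddHaarMeasure]

/-- Affine change of variables in the ball. -/
lemma aux_affine {B : Set E} (hB : MeasurableSet B) {g : E → ℝ≥0∞} (hg : Measurable g)
    {c : ℝ} (hc : 1 / 2 ≤ c) (a : E) (hmem : ∀ x ∈ B, c • x + a ∈ B) :
    ∫⁻ x in B, g (c • x + a) ∂μ ≤ 2 ^ (Module.finrank ℝ E) * ∫⁻ x in B, g x ∂μ := by
  have hc0 : c ≠ 0 := by linarith
  have hgi : Measurable (B.indicator g) := hg.indicator hB
  calc ∫⁻ x in B, g (c • x + a) ∂μ = ∫⁻ x in B, B.indicator g (c • x + a) ∂μ := by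
        apply setLIntegral_congr_fun hB
        intro x hx
        simp [hmem x hx]
    _ ≤ ∫⁻ x, B.indicator g (c • x + a) ∂μ := setLIntegral_le_lintegral _ _
    _ = ∫⁻ y, B.indicator g (y + a) ∂(Measure.map (fun x => c • x) μ) := by
        rw [lintegral_map (f := fun y => B.indicator g (y + a))
          (hgi.comp (measurable_add_const a)) (measurable_const_smul c)]
    _ = ENNReal.ofReal |(c ^ Module.finrank ℝ E)⁻¹| * ∫⁻ y in B, g y ∂μ := by
        rw [Measure.map_addHaar_smul μ hc0, lintegral_smul_measure,
          lintegral_add_right_eq_self (B.indicator g) a, lintegral_indicator hB, smul_eq_mul]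
    _ ≤ _ := by
        gcongr
        have h2 : (2 : ℝ≥0∞) ^ (Module.finrank ℝ E) = ENNReal.ofReal (2 ^ (Module.finrank ℝ E)) := by
          rw [ENNReal.ofReal_pow (by norm_num)]; simp
        rw [h2]
        apply ENNReal.ofReal_le_ofReal
        rw [abs_of_nonneg (by positivity), ← inv_pow]
        gcongr
        rw [inv_le_comm₀ (by linarith) (by norm_num)]
        linarith

lemma aux_ftc {w : E → ℝ} (hw : ContDiff ℝ 1 w) (x y : E) :
    ‖w x - w y‖ₑ ≤ ∫⁻ t in Set.Icc (0:ℝ) 1, ‖fderiv ℝ w ((1 - t) • x + t • y)‖ₑ * ‖y - x‖ₑ := by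
  have hd : ∀ t : ℝ, HasDerivAt (fun t : ℝ => w ((1 - t) • x + t • y))
      (fderiv ℝ w ((1 - t) • x + t • y) (y - x)) t := by
    intro t
    have h1 : HasDerivAt (fun t : ℝ => (1 - t) • x + t • y) (y - x) t := by
      have := (((hasDerivAt_id t).const_sub 1).smul_const x).add ((hasDerivAt_id t).smul_const y)
      have h2 : y - x = (-1 : ℝ) • x + (1 : ℝ) • y := by module
      rw [h2]
      exact this
    exact ((hw.differentiable one_ne_zero _).hasFDerivAt).comp_hasDerivAt t h1
  have hcont : Continuous (fun t : ℝ => fderiv ℝ w ((1 - t) • x + t • y) (y - x)) := by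
    have := hw.continuous_fderiv one_ne_zero
    fun_prop
  have h := intervalIntegral.integral_eq_sub_of_hasDerivAt (a := 0) (b := 1)
    (fun t _ => hd t) (hcont.intervalIntegrable _ _)
  simp only [sub_self, zero_smul, one_smul, zero_add, sub_zero, add_zero] at h
  rw [← enorm_neg, neg_sub, ← h, intervalIntegral.integral_of_le zero_le_one,
    ← integral_Icc_eq_integral_Ioc]
  refine (enorm_integral_le_lintegral_enorm _).trans ?_
  gcongr
  exact ContinuousLinearMap.le_opENorm _ _

lemma aux_poincare {w : E → ℝ} (hw : ContDiff ℝ 1 w) (x₀ : E) (r : ℝ) :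
    ∫⁻ x in ball x₀ r, ∫⁻ y in ball x₀ r, ‖w x - w y‖ₑ ∂μ ∂μ ≤
      ENNReal.ofReal (2 * r) * 2 ^ (Module.finrank ℝ E) * μ (ball x₀ r) *
        ∫⁻ x in ball x₀ r, ‖fderiv ℝ w x‖ₑ ∂μ := by
  set B := ball x₀ r with hBdef
  have hB : MeasurableSet B := measurableSet_ball
  have hfd := hw.continuous_fderiv one_ne_zero
  set g : E → ℝ≥0∞ := fun x => ‖fderiv ℝ w x‖ₑ with hgdef
  have hgc : Continuous g := by fun_prop
  have hg : Measurable g := hgc.measurable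
  have hconv : Convex ℝ B := convex_ball x₀ r
  set d := Module.finrank ℝ E
  have step1 : ∀ x ∈ B, ∀ y ∈ B, ‖w x - w y‖ₑ ≤
      ENNReal.ofReal (2 * r) * ∫⁻ t in Set.Icc (0:ℝ) 1, g ((1 - t) • x + t • y) := by
    intro x hx y hy
    refine (aux_ftc hw x y).trans ?_
    rw [lintegral_mul_const _ (by fun_prop), mul_comm]
    gcongr
    rw [← ofReal_norm]
    apply ENNReal.ofReal_le_ofReal
    rw [← dist_eq_norm]
    have := dist_triangle_right y x x₀
    have h1 := mem_ball.1 hx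
    have h2 := mem_ball.1 hy
    linarith
  have step2 : ∀ t ∈ Set.Icc (0:ℝ) 1,
      ∫⁻ x in B, ∫⁻ y in B, g ((1 - t) • x + t • y) ∂μ ∂μ ≤
        2 ^ d * μ B * ∫⁻ x in B, g x ∂μ := by
    intro t ht
    rcases le_total t (1/2) with h | h
    · rw [lintegral_lintegral_swap (by
        apply Continuous.aemeasurable; unfold Function.uncurry; fun_prop)]
      calc _ ≤ ∫⁻ y in B, 2 ^ d * ∫⁻ x in B, g x ∂μ ∂μ := by
            apply setLIntegral_mono' hB
            intro y hy
            apply aux_affine μ hB hg (by linarith)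
            intro x hx
            exact hconv hx hy (by linarith [ht.2]) ht.1 (by ring)
        _ = _ := by rw [setLIntegral_const]; ring
    · calc _ ≤ ∫⁻ x in B, 2 ^ d * ∫⁻ x in B, g x ∂μ ∂μ := by
            apply setLIntegral_mono' hB
            intro x hx
            simp_rw [add_comm ((1 - t) • x)]
            apply aux_affine μ hB hg (by linarith)
            intro y hy
            rw [add_comm]
            exact hconv hx hy (by linarith [ht.2]) ht.1 (by ring)
        _ = _ := by rw [setLIntegral_const]; ring
  calc ∫⁻ x in B, ∫⁻ y in B, ‖w x - w y‖ₑ ∂μ ∂μ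
      ≤ ∫⁻ x in B, ∫⁻ y in B, ENNReal.ofReal (2 * r) *
          ∫⁻ t in Set.Icc (0:ℝ) 1, g ((1 - t) • x + t • y) ∂volume ∂μ ∂μ := by
        apply setLIntegral_mono' hB
        intro x hx
        apply setLIntegral_mono' hB
        intro y hy
        exact step1 x hx y hy
    _ = ENNReal.ofReal (2 * r) * ∫⁻ x in B, ∫⁻ y in B,
          ∫⁻ t in Set.Icc (0:ℝ) 1, g ((1 - t) • x + t • y) ∂volume ∂μ ∂μ := by
        simp_rw [lintegral_const_mul' _ _ ENNReal.ofReal_ne_top]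
    _ = ENNReal.ofReal (2 * r) * ∫⁻ x in B, ∫⁻ t in Set.Icc (0:ℝ) 1, ∫⁻ y in B,
           g ((1 - t) • x + t • y) ∂μ ∂volume ∂μ := by
        congr 1
        apply lintegral_congr
        intro x
        rw [lintegral_lintegral_swap]
        apply Continuous.aemeasurable; unfold Function.uncurry; fun_prop
    _ = ENNReal.ofReal (2 * r) * ∫⁻ t in Set.Icc (0:ℝ) 1, ∫⁻ x in B, ∫⁻ y in B,
           g ((1 - t) • x + t • y) ∂μ ∂μ := by
        congr 1
        rw [lintegral_lintegral_swap]
        have : Measurable (fun p : (E × ℝ) × E => g ((1 - p.1.2) • p.1.1 + p.1.2 • p.2)) := by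
          apply Continuous.measurable; fun_prop
        exact (this.lintegral_prod_right' (ν := μ.restrict B)).aemeasurable
    _ ≤ ENNReal.ofReal (2 * r) * ∫⁻ t in Set.Icc (0:ℝ) 1, 2 ^ d * μ B * ∫⁻ x in B, g x ∂μ := by
        gcongr 1
        apply setLIntegral_mono' measurableSet_Icc
        exact step2
    _ = _ := by
        rw [setLIntegral_const]; simp; ring

end Helpers

section Helpers2

open Filter Topology

variable {E : Type*} [NormedAddCommGroup E] [NormedSpace ℝ E] [MeasurableSpace E] [BorelSpace E]
  [FiniteDimensional ℝ E] (μ : Measure E) [μ.IsAddHaarMeasure]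

lemma aux_iso {S : Set E} (hS : MeasurableSet S) {w : ℕ → E → ℝ} (hw : ∀ n, ContDiff ℝ 1 (w n))
    (hlim : ∀ x, Tendsto (fun n => w n x) atTop (𝓝 (S.indicator (fun _ => (1:ℝ)) x)))
    (x₀ : E) (r : ℝ) :
    μ (S ∩ ball x₀ r) * μ (Sᶜ ∩ ball x₀ r) ≤
      ENNReal.ofReal (2 * r) * 2 ^ (Module.finrank ℝ E) * μ (ball x₀ r) *
        liminf (fun n => ∫⁻ x in ball x₀ r, ‖fderiv ℝ (w n) x‖ₑ ∂μ) atTop := by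
  set B := ball x₀ r with hBdef
  have hpt : ∀ x y, S.indicator (fun _ => (1:ℝ≥0∞)) x * Sᶜ.indicator (fun _ => (1:ℝ≥0∞)) y ≤
      liminf (fun n => ‖w n x - w n y‖ₑ) atTop := by
    intro x y
    rw [((hlim x).sub (hlim y)).enorm.liminf_eq]
    by_cases hx : x ∈ S <;> by_cases hy : y ∈ S <;> simp [hx, hy]
  have hwc : ∀ n, Continuous (w n) := fun n => (hw n).continuous
  calc μ (S ∩ B) * μ (Sᶜ ∩ B)
      = ∫⁻ x in B, ∫⁻ y in B, S.indicator (fun _ => (1:ℝ≥0∞)) x *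
          Sᶜ.indicator (fun _ => (1:ℝ≥0∞)) y ∂μ ∂μ := by
        have h1 : Measurable (S.indicator (fun _ => (1:ℝ≥0∞))) := measurable_const.indicator hS
        have h2 : Measurable (Sᶜ.indicator (fun _ => (1:ℝ≥0∞))) :=
          measurable_const.indicator hS.compl
        simp_rw [lintegral_const_mul _ h2]
        rw [lintegral_mul_const _ h1, lintegral_indicator hS, lintegral_indicator hS.compl]
        simp [Measure.restrict_apply, hS, hS.compl]
    _ ≤ ∫⁻ x in B, ∫⁻ y in B, liminf (fun n => ‖w n x - w n y‖ₑ) atTop ∂μ ∂μ := by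
        gcongr with x y
        exact hpt x y
    _ ≤ ∫⁻ x in B, liminf (fun n => ∫⁻ y in B, ‖w n x - w n y‖ₑ ∂μ) atTop ∂μ := by
        gcongr with x
        apply lintegral_liminf_le
        intro n
        have := hwc n
        apply Continuous.measurable; fun_prop
    _ ≤ liminf (fun n => ∫⁻ x in B, ∫⁻ y in B, ‖w n x - w n y‖ₑ ∂μ ∂μ) atTop := by
        apply lintegral_liminf_le
        intro n
        have := hwc n
        have h : Measurable (fun p : E × E => ‖w n p.1 - w n p.2‖ₑ) := by
          apply Continuous.measurable; fun_prop
        exact h.lintegral_prod_right' (ν := μ.restrict B)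
    _ ≤ liminf (fun n => ENNReal.ofReal (2 * r) * 2 ^ (Module.finrank ℝ E) * μ B *
          ∫⁻ x in B, ‖fderiv ℝ (w n) x‖ₑ ∂μ) atTop := by
        exact liminf_le_liminf (Eventually.of_forall fun n => aux_poincare μ (hw n) x₀ r)
    _ = _ := by
        apply ENNReal.liminf_const_mul_of_ne_top
        have : μ B ≠ ⊤ := measure_ball_lt_top.ne
        finiteness

lemma aux_radius (hd : 1 ≤ Module.finrank ℝ E) {S : Set E} (hS : IsOpen S) (hfin : μ S ≠ ⊤)
    {x : E} (hx : x ∈ S) :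
    ∃ r : ℝ, 0 < r ∧ μ (ball x r) ≤ 2 ^ (Module.finrank ℝ E + 1) * μ (S ∩ ball x r) ∧
      μ (ball x r) ≤ 2 * μ (Sᶜ ∩ ball x r) := by
  obtain ⟨r₀, hr₀, hsub⟩ := Metric.isOpen_iff.1 hS x hx
  set d := Module.finrank ℝ E
  have hnt : Nontrivial E := Module.nontrivial_of_finrank_pos (R := ℝ) (by omega)
  set ω := μ (ball (0:E) 1) with hω
  have hω0 : ω ≠ 0 := (measure_ball_pos μ _ one_pos).ne'
  have hωt : ω ≠ ⊤ := measure_ball_lt_top.ne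
  have hball : ∀ k : ℕ, μ (ball x (2 ^ k * r₀)) = ENNReal.ofReal ((2 ^ k * r₀) ^ d) * ω := fun k =>
    Measure.addHaar_ball μ x (by positivity)
  have hex : ∃ k : ℕ, 2 * μ (S ∩ ball x (2 ^ k * r₀)) < μ (ball x (2 ^ k * r₀)) := by
    have ht : Tendsto (fun k : ℕ => ENNReal.ofReal ((2 ^ k * r₀) ^ d) * ω) atTop (𝓝 (⊤ * ω)) := by
      apply ENNReal.Tendsto.mul_const _ (Or.inl (by simp))
      have hA0 : Tendsto (fun k : ℕ => (2:ℝ) ^ k) atTop atTop :=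
        tendsto_pow_atTop_atTop_of_one_lt one_lt_two
      have hA : Tendsto (fun k : ℕ => (2:ℝ) ^ k * r₀) atTop atTop :=
        Filter.Tendsto.atTop_mul_const hr₀ hA0
      have hA2 : Tendsto (fun k : ℕ => ((2:ℝ) ^ k * r₀) ^ d) atTop atTop :=
        (tendsto_pow_atTop (by omega)).comp hA
      exact ENNReal.tendsto_ofReal_atTop.comp hA2
    rw [ENNReal.top_mul hω0] at ht
    have h2 : 2 * μ S < ⊤ := by finiteness
    obtain ⟨k, hk⟩ := (ht.eventually (lt_mem_nhds h2)).exists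
    refine ⟨k, lt_of_le_of_lt ?_ ((hball k).symm ▸ hk)⟩
    gcongr
    exact Set.inter_subset_left
  classical
  set k := Nat.find hex with hkdef
  have hk := Nat.find_spec hex
  have hk0 : k ≠ 0 := by
    intro h0
    rw [← hkdef, h0] at hk
    simp only [pow_zero, one_mul] at hk
    rw [Set.inter_eq_self_of_subset_right hsub] at hk
    have := le_mul_of_one_le_left (zero_le (a := μ (ball x r₀))) (one_le_two (α := ℝ≥0∞))
    exact absurd hk (not_lt.2 this)
  obtain ⟨j, hj⟩ := Nat.exists_eq_succ_of_ne_zero hk0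
  have hjn := Nat.find_min hex (m := j) (by omega)
  rw [not_lt] at hjn
  rw [← hkdef] at hk
  refine ⟨2 ^ k * r₀, by positivity, ?_, ?_⟩
  · calc μ (ball x (2 ^ k * r₀)) = 2 ^ d * μ (ball x (2 ^ j * r₀)) := by
          rw [hball, hball, hj, Nat.succ_eq_add_one, pow_succ,
            show ((2:ℝ) ^ j * 2 * r₀) ^ d = 2 ^ d * (2 ^ j * r₀) ^ d by rw [← mul_pow]; ring,
            ENNReal.ofReal_mul (by positivity), ENNReal.ofReal_pow (by norm_num), mul_assoc]
          simp
      _ ≤ 2 ^ d * (2 * μ (S ∩ ball x (2 ^ j * r₀))) := by gcongr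
      _ ≤ 2 ^ d * (2 * μ (S ∩ ball x (2 ^ k * r₀))) := by
          gcongr
          · norm_num
          · omega
      _ = _ := by rw [pow_succ, mul_assoc]
  · set B := ball x (2 ^ k * r₀)
    have hB : μ B ≠ ⊤ := measure_ball_lt_top.ne
    have hsplit : μ (S ∩ B) + μ (Sᶜ ∩ B) = μ B := by
      rw [Set.inter_comm, Set.inter_comm Sᶜ, ← Set.sdiff_eq]
      exact measure_inter_add_sdiff B hS.measurableSet
    have h1 : μ (S ∩ B) ≠ ⊤ := measure_ne_top_of_subset Set.inter_subset_right hB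
    have h2 : μ (Sᶜ ∩ B) ≠ ⊤ := measure_ne_top_of_subset Set.inter_subset_right hB
    rw [← hsplit] at hk ⊢
    lift μ (S ∩ B) to NNReal using h1 with a
    lift μ (Sᶜ ∩ B) to NNReal using h2 with b
    norm_cast at hk ⊢
    have : (2:ℝ) * a < a + b := by exact_mod_cast hk
    have : (a:ℝ) + b ≤ 2 * b := by linarith
    exact_mod_cast this

lemma aux_ball_bound (hd : 1 ≤ Module.finrank ℝ E) {S : Set E} (hS : IsOpen S)
    {w : ℕ → E → ℝ} (hw : ∀ n, ContDiff ℝ 1 (w n))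
    (hlim : ∀ x, Tendsto (fun n => w n x) atTop (𝓝 (S.indicator (fun _ => (1:ℝ)) x)))
    {x : E} {r : ℝ} (hr : 0 < r)
    (h1 : μ (ball x r) ≤ 2 ^ (Module.finrank ℝ E + 1) * μ (S ∩ ball x r))
    (h2 : μ (ball x r) ≤ 2 * μ (Sᶜ ∩ ball x r)) :
    ENNReal.ofReal (r ^ (Module.finrank ℝ E - 1)) ≤
      (μ (ball 0 1))⁻¹ * 2 ^ (2 * Module.finrank ℝ E + 3) *
        liminf (fun n => ∫⁻ x in ball x r, ‖fderiv ℝ (w n) x‖ₑ ∂μ) atTop := by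
  have hnt : Nontrivial E := Module.nontrivial_of_finrank_pos (R := ℝ) (by omega)
  have hiso := aux_iso μ hS.measurableSet hw hlim x r
  set L := liminf (fun n => ∫⁻ x in ball x r, ‖fderiv ℝ (w n) x‖ₑ ∂μ) atTop
  have hb : μ (ball x r) = ENNReal.ofReal (r ^ Module.finrank ℝ E) * μ (ball 0 1) :=
    Measure.addHaar_ball μ x hr.le
  obtain ⟨e, he⟩ : ∃ e, Module.finrank ℝ E = e + 1 := ⟨_, (Nat.sub_add_cancel hd).symm⟩
  rw [he] at h1 hiso hb ⊢
  set ω := μ (ball (0:E) 1) with hω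
  have hω0 : ω ≠ 0 := (measure_ball_pos μ _ one_pos).ne'
  have hωt : ω ≠ ⊤ := measure_ball_lt_top.ne
  have hB0 : μ (ball x r) ≠ 0 := (measure_ball_pos μ _ hr).ne'
  have hBt : μ (ball x r) ≠ ⊤ := measure_ball_lt_top.ne
  have h3 : μ (ball x r) * μ (ball x r) ≤
      μ (ball x r) * (2 ^ (2 * (e + 1) + 3) * ENNReal.ofReal r * L) := by
    calc μ (ball x r) * μ (ball x r)
        ≤ (2 ^ (e + 1 + 1) * μ (S ∩ ball x r)) * (2 * μ (Sᶜ ∩ ball x r)) := by gcongr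
      _ = 2 ^ (e + 1 + 2) * (μ (S ∩ ball x r) * μ (Sᶜ ∩ ball x r)) := by ring
      _ ≤ 2 ^ (e + 1 + 2) * (ENNReal.ofReal (2 * r) * 2 ^ (e + 1) * μ (ball x r) * L) := by gcongr
      _ = _ := by
        rw [ENNReal.ofReal_mul (by norm_num)]
        simp only [ENNReal.ofReal_ofNat]
        ring
  rw [ENNReal.mul_le_mul_iff_right hB0 hBt, hb, pow_succ r, ENNReal.ofReal_mul (by positivity)] at h3
  have hr0 : ENNReal.ofReal r ≠ 0 := by simpa using hr
  have h4 : ENNReal.ofReal r * (ENNReal.ofReal (r ^ e) * ω) ≤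
      ENNReal.ofReal r * (2 ^ (2 * (e + 1) + 3) * L) := by
    convert h3 using 1 <;> ring
  rw [ENNReal.mul_le_mul_iff_right hr0 ENNReal.ofReal_ne_top] at h4
  simp only [Nat.add_sub_cancel]
  calc ENNReal.ofReal (r ^ e) = ω⁻¹ * (ENNReal.ofReal (r ^ e) * ω) := by
        rw [mul_comm (ENNReal.ofReal _), ← mul_assoc, ENNReal.inv_mul_cancel hω0 hωt, one_mul]
    _ ≤ ω⁻¹ * (2 ^ (2 * (e + 1) + 3) * L) := by gcongr
    _ = _ := by rw [mul_assoc]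

lemma aux_boxing (hd : 1 ≤ Module.finrank ℝ E) {S : Set E} (hS : IsOpen S) (hfin : μ S ≠ ⊤)
    {w : ℕ → E → ℝ} (hw : ∀ n, ContDiff ℝ 1 (w n))
    (hlim : ∀ x, Tendsto (fun n => w n x) atTop (𝓝 (S.indicator (fun _ => (1:ℝ)) x)))
    {ν : Measure E} {c : ℝ≥0∞}
    (hν : ∀ (x : E) (r : ℝ), 0 < r →
      ν (ball x r) ≤ c * ENNReal.ofReal (r ^ (Module.finrank ℝ E - 1))) :
    ν S ≤ c * (6 ^ (Module.finrank ℝ E - 1) * ((μ (ball 0 1))⁻¹ *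
        2 ^ (2 * Module.finrank ℝ E + 3))) *
        liminf (fun n => ∫⁻ x, ‖fderiv ℝ (w n) x‖ₑ ∂μ) atTop := by
  have hnt : Nontrivial E := Module.nontrivial_of_finrank_pos (R := ℝ) (by omega)
  have hrad : ∀ x : S, ∃ r : ℝ, 0 < r ∧
      μ (ball (x:E) r) ≤ 2 ^ (Module.finrank ℝ E + 1) * μ (S ∩ ball (x:E) r) ∧
      μ (ball (x:E) r) ≤ 2 * μ (Sᶜ ∩ ball (x:E) r) := fun x => aux_radius μ hd hS hfin x.2
  choose r hr0 hr1 hr2 using hrad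
  set d := Module.finrank ℝ E with hddef
  set ω := μ (ball (0:E) 1) with hω
  have hω0 : ω ≠ 0 := (measure_ball_pos μ _ one_pos).ne'
  have hωt : ω ≠ ⊤ := measure_ball_lt_top.ne
  have hR : ∃ R : ℝ, ∀ x : S, r x ≤ R := by
    set M : ℝ≥0∞ := 2 ^ (d + 1) * μ S * ω⁻¹ with hM
    have hMt : M ≠ ⊤ := by
      have : ω⁻¹ ≠ ⊤ := by simpa using hω0
      finiteness
    refine ⟨max 1 M.toReal, fun x => ?_⟩
    by_contra hcon
    rw [not_le, max_lt_iff] at hcon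
    have hle : ENNReal.ofReal (r x ^ d) ≤ M := by
      have h : μ (ball (x:E) (r x)) ≤ 2 ^ (d + 1) * μ S :=
        (hr1 x).trans (by gcongr; exact Set.inter_subset_left)
      rw [Measure.addHaar_ball μ (x:E) (hr0 x).le] at h
      calc ENNReal.ofReal (r x ^ d) = ENNReal.ofReal (r x ^ d) * ω * ω⁻¹ := by
            rw [mul_assoc, ENNReal.mul_inv_cancel hω0 hωt, mul_one]
        _ ≤ M := by rw [hM]; gcongr
    have h2 : r x ^ d ≤ M.toReal := (ENNReal.ofReal_le_iff_le_toReal hMt).1 hle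
    have h3 : r x ≤ r x ^ d := le_self_pow₀ hcon.1.le (by omega)
    linarith [hcon.2]
  obtain ⟨R, hR⟩ := hR
  obtain ⟨u, -, hdisj, hcov⟩ := Vitali.exists_disjoint_subfamily_covering_enlargement_closedBall
    (Set.univ : Set S) (fun x => (x:E)) r R (fun x _ => hR x) 5 (by norm_num)
  have hdisj' : u.PairwiseDisjoint (fun a => ball (a:E) (r a)) :=
    hdisj.mono_on fun a _ => ball_subset_closedBall
  have hcount : u.Countable := hdisj'.countable_of_isOpen (fun _ _ => isOpen_ball)
    (fun a _ => ⟨a, mem_ball_self (hr0 a)⟩)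
  have : Countable u := hcount.to_subtype
  set K := (ω⁻¹ * 2 ^ (2 * d + 3)) with hK
  have hKt : K ≠ ⊤ := by
    have : ω⁻¹ ≠ ⊤ := by simpa using hω0
    finiteness
  have hfd : ∀ n, Measurable fun x => ‖fderiv ℝ (w n) x‖ₑ := by
    intro n
    have := (hw n).continuous_fderiv one_ne_zero
    apply Continuous.measurable; fun_prop
  calc ν S ≤ ν (⋃ a ∈ u, ball (a:E) (6 * r a)) := by
        apply measure_mono
        intro x hx
        obtain ⟨b, hb, hsub⟩ := hcov ⟨x, hx⟩ trivial
        refine Set.mem_biUnion hb ?_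
        have h1 := hsub (mem_closedBall_self (hr0 ⟨x, hx⟩).le)
        exact closedBall_subset_ball (by linarith [hr0 b]) h1
    _ ≤ ∑' a : u, ν (ball (a:E) (6 * r a)) := measure_biUnion_le ν hcount _
    _ ≤ ∑' a : u, c * (6 ^ (d - 1) * K) *
          liminf (fun n => ∫⁻ x in ball (a:E) (r a), ‖fderiv ℝ (w n) x‖ₑ ∂μ) atTop := by
        apply ENNReal.tsum_le_tsum
        intro a
        refine (hν _ _ (by linarith [hr0 a])).trans ?_
        rw [mul_pow, ENNReal.ofReal_mul (by positivity), ENNReal.ofReal_pow (by norm_num),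
          mul_assoc c, mul_assoc (6 ^ (d - 1))]
        simp only [ENNReal.ofReal_ofNat]
        gcongr
        exact aux_ball_bound μ hd hS hw hlim (hr0 a) (hr1 a) (hr2 a)
    _ = c * (6 ^ (d - 1) * K) * ∑' a : u,
          liminf (fun n => ∫⁻ x in ball (a:E) (r a), ‖fderiv ℝ (w n) x‖ₑ ∂μ) atTop :=
        ENNReal.tsum_mul_left
    _ ≤ c * (6 ^ (d - 1) * K) * liminf (fun n => ∫⁻ x, ‖fderiv ℝ (w n) x‖ₑ ∂μ) atTop := by
        gcongr
        let _ : MeasurableSpace u := ⊤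
        rw [← lintegral_count]
        refine (lintegral_liminf_le (fun n => measurable_from_top)).trans ?_
        refine liminf_le_liminf (Eventually.of_forall fun n => ?_)
        rw [lintegral_count, ← lintegral_iUnion (fun a => measurableSet_ball)]
        · exact setLIntegral_le_lintegral _ _
        · exact hdisj'.subtype _ _

end Helpers2

section Helpers3

open Filter Topology

lemma aux_sigma : ∃ M : ℝ≥0∞, M ≠ ⊤ ∧ ∀ t, ‖deriv Real.smoothTransition t‖ₑ ≤
    (Set.Icc (0:ℝ) 1).indicator (fun _ => M) t := by
  have hc : Continuous (deriv Real.smoothTransition) :=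
    (Real.smoothTransition.contDiff (n := 1)).continuous_deriv le_rfl
  obtain ⟨M, hM⟩ := isCompact_Icc.exists_bound_of_continuousOn (s := Set.Icc (0:ℝ) 1) hc.continuousOn
  refine ⟨ENNReal.ofReal M, ENNReal.ofReal_ne_top, fun t => ?_⟩
  by_cases ht : t ∈ Set.Icc (0:ℝ) 1
  · rw [Set.indicator_of_mem ht, ← ofReal_norm]
    exact ENNReal.ofReal_le_ofReal (hM t ht)
  · rw [Set.indicator_of_notMem ht]
    have : deriv Real.smoothTransition t = 0 := by
      rw [Set.mem_Icc, not_and_or, not_le, not_le] at ht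
      rcases ht with ht | ht
      · have : Real.smoothTransition =ᶠ[𝓝 t] fun _ => 0 := by
          filter_upwards [Iio_mem_nhds ht] with y hy
          exact Real.smoothTransition.zero_of_nonpos (le_of_lt hy)
        rw [this.deriv_eq, deriv_const]
      · have : Real.smoothTransition =ᶠ[𝓝 t] fun _ => 1 := by
          filter_upwards [Ioi_mem_nhds ht] with y hy
          exact Real.smoothTransition.one_of_one_le (le_of_lt hy)
        rw [this.deriv_eq, deriv_const]
    simp [this]

variable {E : Type*} [NormedAddCommGroup E] [NormedSpace ℝ E] [MeasurableSpace E] [BorelSpace E]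
  [FiniteDimensional ℝ E] (μ : Measure E) [μ.IsAddHaarMeasure]

lemma aux_scalar (hd : 1 ≤ Module.finrank ℝ E) :
    ∃ K : ℝ≥0∞, K ≠ ⊤ ∧ ∀ (ν : Measure E) (c : ℝ≥0∞),
    (∀ (x : E) (r : ℝ), 0 < r →
      ν (ball x r) ≤ c * ENNReal.ofReal (r ^ (Module.finrank ℝ E - 1))) →
    ∀ f : E → ℝ, ContDiff ℝ 1 f → HasCompactSupport f →
    ∫⁻ x, ENNReal.ofReal (f x) ∂ν ≤ c * K * ∫⁻ x, ‖fderiv ℝ f x‖ₑ ∂μ := by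
  obtain ⟨M, hMt, hM⟩ := aux_sigma
  set A : ℝ≥0∞ := 6 ^ (Module.finrank ℝ E - 1) * ((μ (ball 0 1))⁻¹ *
        2 ^ (2 * Module.finrank ℝ E + 3)) with hA
  refine ⟨A * M, ?_, ?_⟩
  · have : (μ (ball (0:E) 1))⁻¹ ≠ ⊤ := by
      simpa using (measure_ball_pos μ (0:E) one_pos).ne'
    finiteness
  intro ν c hν f hf hsupp
  have hσ : ContDiff ℝ 1 Real.smoothTransition := Real.smoothTransition.contDiff (n := 1)
  have hσ' : Continuous (deriv Real.smoothTransition) := hσ.continuous_deriv le_rfl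
  have hfc := hf.continuous
  have hf' := hf.continuous_fderiv one_ne_zero
  set w : ℝ → ℕ → E → ℝ := fun s n x => Real.smoothTransition (((n:ℝ) + 1) * (f x - s)) with hwdef
  have hwC : ∀ s n, ContDiff ℝ 1 (w s n) := fun s n =>
    hσ.comp (contDiff_const.mul (hf.sub contDiff_const))
  have hfd : ∀ s n x, ‖fderiv ℝ (w s n) x‖ₑ =
      ‖deriv Real.smoothTransition (((n:ℝ) + 1) * (f x - s)) * ((n:ℝ) + 1)‖ₑ * ‖fderiv ℝ f x‖ₑ := by
    intro s n x
    have h1 : HasFDerivAt (fun x => ((n:ℝ) + 1) * (f x - s)) (((n:ℝ) + 1) • fderiv ℝ f x) x :=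
      (((hf.differentiable one_ne_zero x).hasFDerivAt).sub_const s).const_mul _
    have h2 := ((hσ.differentiable one_ne_zero (((n:ℝ) + 1) * (f x - s))).hasDerivAt).comp_hasFDerivAt x h1
    have h3 : fderiv ℝ (w s n) x = _ := h2.fderiv
    rw [h3, smul_smul, enorm_smul]
  have hlim : ∀ s x, Tendsto (fun n => w s n x) atTop
      (𝓝 ({x | s < f x}.indicator (fun _ => (1:ℝ)) x)) := by
    intro s x
    by_cases hx : s < f x
    · rw [Set.indicator_of_mem (by exact hx)]
      apply tendsto_const_nhds.congr'
      obtain ⟨n₀, hn₀⟩ := exists_nat_gt (1 / (f x - s))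
      filter_upwards [eventually_ge_atTop n₀] with n hn
      symm
      apply Real.smoothTransition.one_of_one_le
      have hpos : 0 < f x - s := by linarith
      rw [div_lt_iff₀ hpos] at hn₀
      have : (n₀:ℝ) ≤ n := by exact_mod_cast hn
      nlinarith
    · rw [Set.indicator_of_notMem (by exact hx)]
      apply tendsto_const_nhds.congr
      intro n
      symm
      apply Real.smoothTransition.zero_of_nonpos
      rw [not_lt] at hx
      exact mul_nonpos_of_nonneg_of_nonpos (by positivity) (by linarith)
  have hbox : ∀ s ∈ Set.Ioi (0:ℝ), ν {x | s < f x} ≤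
      c * A * liminf (fun n => ∫⁻ x, ‖fderiv ℝ (w s n) x‖ₑ ∂μ) atTop := by
    intro s hs
    apply aux_boxing μ hd (isOpen_lt continuous_const hfc) _ (hwC s) (hlim s) hν
    apply measure_ne_top_of_subset _ hsupp.isCompact.measure_lt_top.ne
    intro x hx
    apply subset_tsupport
    have hx' : s < f x := hx
    have hs' : 0 < s := hs
    exact (hs'.trans hx').ne'
  have hslice : ∀ (n : ℕ) x, ∫⁻ s, ‖deriv Real.smoothTransition (((n:ℝ) + 1) * (f x - s)) * ((n:ℝ) + 1)‖ₑ
      ≤ M := by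
    intro n x
    have hn : (0:ℝ) < (n:ℝ) + 1 := by positivity
    calc _ ≤ ∫⁻ s, (Set.Icc (f x - 1 / ((n:ℝ) + 1)) (f x)).indicator
            (fun _ => M * ENNReal.ofReal ((n:ℝ) + 1)) s := by
          gcongr with s
          rw [enorm_mul, Real.enorm_of_nonneg hn.le]
          by_cases hs : s ∈ Set.Icc (f x - 1 / ((n:ℝ) + 1)) (f x)
          · rw [Set.indicator_of_mem hs]
            gcongr
            exact (hM _).trans (Set.indicator_le_self _ _ _)
          · rw [Set.indicator_of_notMem hs]
            have h0 := hM (((n:ℝ) + 1) * (f x - s))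
            rw [Set.indicator_of_notMem] at h0
            · simp [nonpos_iff_eq_zero.1 h0]
            · intro hmem
              apply hs
              constructor
              · have := hmem.2
                rw [← le_div_iff₀' hn] at this
                linarith
              · have := nonneg_of_mul_nonneg_right hmem.1 hn
                linarith
      _ = M * ENNReal.ofReal ((n:ℝ) + 1) * ENNReal.ofReal (1 / ((n:ℝ) + 1)) := by
          rw [lintegral_indicator measurableSet_Icc, setLIntegral_const, Real.volume_Icc]
          congr 2
          ring
      _ = M := by
          rw [mul_assoc, ← ENNReal.ofReal_mul hn.le, mul_one_div_cancel hn.ne']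
          simp
  have hmeas : ∀ n : ℕ, Measurable fun p : ℝ × E =>
      ‖deriv Real.smoothTransition (((n:ℝ) + 1) * (f p.2 - p.1)) * ((n:ℝ) + 1)‖ₑ *
        ‖fderiv ℝ f p.2‖ₑ := by
    intro n
    apply Measurable.fun_mul <;> (apply Continuous.measurable; fun_prop)
  calc ∫⁻ x, ENNReal.ofReal (f x) ∂ν = ∫⁻ x, ENNReal.ofReal (max (f x) 0) ∂ν := by
        simp
    _ = ∫⁻ s in Set.Ioi (0:ℝ), ν {x | s < max (f x) 0} := by
        apply lintegral_eq_lintegral_meas_lt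
        · exact Eventually.of_forall fun x => le_max_right _ _
        · exact (hfc.max continuous_const).aemeasurable
    _ ≤ ∫⁻ s in Set.Ioi (0:ℝ), c * A * liminf (fun n => ∫⁻ x, ‖fderiv ℝ (w s n) x‖ₑ ∂μ) atTop := by
        apply setLIntegral_mono' measurableSet_Ioi
        intro s hs
        refine le_trans (measure_mono ?_) (hbox s hs)
        intro x hx
        have hx' : s < max (f x) 0 := hx
        rcases lt_max_iff.1 hx' with h | h
        · exact h
        · exact absurd h (not_lt.2 (le_of_lt hs))
    _ = c * A * ∫⁻ s in Set.Ioi (0:ℝ), liminf (fun n => ∫⁻ x, ‖fderiv ℝ (w s n) x‖ₑ ∂μ) atTop := by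
        apply lintegral_const_mul
        apply Measurable.liminf
        intro n
        simp_rw [hfd]
        exact (hmeas n).lintegral_prod_right' (ν := μ)
    _ ≤ c * A * liminf (fun n => ∫⁻ s in Set.Ioi (0:ℝ), ∫⁻ x, ‖fderiv ℝ (w s n) x‖ₑ ∂μ) atTop := by
        gcongr
        apply lintegral_liminf_le
        intro n
        simp_rw [hfd]
        exact (hmeas n).lintegral_prod_right' (ν := μ)
    _ ≤ c * A * liminf (fun _ : ℕ => M * ∫⁻ x, ‖fderiv ℝ f x‖ₑ ∂μ) atTop := by
        gcongr 1
        refine liminf_le_liminf (Eventually.of_forall fun n => ?_)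
        simp_rw [hfd]
        rw [lintegral_lintegral_swap (hmeas n).aemeasurable,
          ← lintegral_const_mul _ (by apply Continuous.measurable; fun_prop)]
        gcongr with x
        rw [lintegral_mul_const _ (by apply Continuous.measurable; fun_prop)]
        gcongr
        exact (setLIntegral_le_lintegral _ _).trans (hslice n x)
    _ = _ := by
        rw [liminf_const]; ring

end Helpers3

section Helpers4

variable {E : Type*} [NormedAddCommGroup E] [NormedSpace ℝ E] [MeasurableSpace E] [BorelSpace E]
  [FiniteDimensional ℝ E] (μ : Measure E) [μ.IsAddHaarMeasure]

lemma aux_vector (F : Type*) [NormedAddCommGroup F] [NormedSpace ℝ F] [FiniteDimensional ℝ F]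
    (hd : 1 ≤ Module.finrank ℝ E) :
    ∃ K : ℝ≥0∞, K ≠ ⊤ ∧ ∀ (ν : Measure E) (c : ℝ≥0∞),
    (∀ (x : E) (r : ℝ), 0 < r →
      ν (ball x r) ≤ c * ENNReal.ofReal (r ^ (Module.finrank ℝ E - 1))) →
    ∀ v : E → F, ContDiff ℝ 1 v → HasCompactSupport v →
    ∫⁻ x, ‖v x‖ₑ ∂ν ≤ c * K * ∫⁻ x, ‖fderiv ℝ v x‖ₑ ∂μ := by
  obtain ⟨K, hK, hmain⟩ := aux_scalar μ hd
  set b := Module.finBasis ℝ F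
  set l : Fin (Module.finrank ℝ F) → (F →L[ℝ] ℝ) := fun i =>
    LinearMap.toContinuousLinearMap (b.coord i) with hl
  refine ⟨∑ i, ‖b i‖ₑ * (2 * K * ‖l i‖ₑ), ?_, ?_⟩
  · refine ENNReal.sum_ne_top.2 fun i _ => ?_
    finiteness
  intro ν c hν v hv hsupp
  have hv' := hv.continuous_fderiv one_ne_zero
  have hvc := hv.continuous
  have hcomp : ∀ (l : F →L[ℝ] ℝ), ∫⁻ x, ENNReal.ofReal (l (v x)) ∂ν ≤
      c * K * (‖l‖ₑ * ∫⁻ x, ‖fderiv ℝ v x‖ₑ ∂μ) := by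
    intro l
    refine (hmain ν c hν (fun x => l (v x)) (l.contDiff.comp hv)
      (hsupp.comp_left (g := l) (map_zero l))).trans ?_
    rw [← lintegral_const_mul ‖l‖ₑ (by apply Continuous.measurable; fun_prop)]
    gcongr with x
    have h1 : fderiv ℝ (fun x => l (v x)) x = l.comp (fderiv ℝ v x) :=
      (l.hasFDerivAt.comp x (hv.differentiable one_ne_zero x).hasFDerivAt).fderiv
    rw [h1]
    exact ContinuousLinearMap.opENorm_comp_le _ _
  have habs : ∀ (l : F →L[ℝ] ℝ), ∫⁻ x, ‖l (v x)‖ₑ ∂ν ≤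
      c * (2 * K * ‖l‖ₑ) * ∫⁻ x, ‖fderiv ℝ v x‖ₑ ∂μ := by
    intro l
    have h1 := hcomp l
    have h2 := hcomp (-l)
    rw [enorm_neg] at h2
    calc ∫⁻ x, ‖l (v x)‖ₑ ∂ν
        ≤ ∫⁻ x, (ENNReal.ofReal (l (v x)) + ENNReal.ofReal ((-l) (v x))) ∂ν := by
          gcongr with x
          rw [← ofReal_norm, Real.norm_eq_abs]
          rcases abs_cases (l (v x)) with h | h
          · rw [h.1]; exact le_self_add
          · rw [h.1]; exact le_add_self
      _ = ∫⁻ x, ENNReal.ofReal (l (v x)) ∂ν + ∫⁻ x, ENNReal.ofReal ((-l) (v x)) ∂ν := by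
          apply lintegral_add_left
          exact (l.continuous.comp hvc).measurable.ennreal_ofReal
      _ ≤ _ := add_le_add h1 h2
      _ = _ := by ring
  calc ∫⁻ x, ‖v x‖ₑ ∂ν ≤ ∫⁻ x, ∑ i, ‖b i‖ₑ * ‖l i (v x)‖ₑ ∂ν := by
        gcongr with x
        have h : v x = ∑ i, l i (v x) • b i := (b.sum_repr (v x)).symm
        calc ‖v x‖ₑ = ‖∑ i, l i (v x) • b i‖ₑ := by rw [← h]
          _ ≤ ∑ i, ‖l i (v x) • b i‖ₑ := enorm_sum_le _ _
          _ = _ := by simp_rw [enorm_smul, mul_comm]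
    _ = ∑ i, ‖b i‖ₑ * ∫⁻ x, ‖l i (v x)‖ₑ ∂ν := by
        rw [lintegral_finsetSum]
        · congr 1
          ext i
          rw [lintegral_const_mul _ (by apply Continuous.measurable; fun_prop)]
        · intro i _
          apply Measurable.const_mul
          apply Continuous.measurable; fun_prop
    _ ≤ ∑ i, ‖b i‖ₑ * (c * (2 * K * ‖l i‖ₑ) * ∫⁻ x, ‖fderiv ℝ v x‖ₑ ∂μ) := by
        gcongr with i
        exact habs _
    _ = _ := by
        rw [Finset.mul_sum, Finset.sum_mul]
        congr 1
        ext i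
        ring

end Helpers4

/-- for `(N-1)`-Ahlfors regular `ν` the trace inequality
`∫ |D^{m-1} u| dν ≤ C C₁ ‖D^m u‖_{L¹}` holds for all `u ∈ C_c^∞(ℝ^N)`. -/
theorem stmt19 (N : ℕ) (hN : 2 ≤ N) (m : ℕ) (hm : 1 ≤ m) :
    ∃ C : ℝ, 0 < C ∧
      ∀ (C₁ : ℝ) (ν : Measure (EuclideanSpace ℝ (Fin N))),
        (∀ (x : EuclideanSpace ℝ (Fin N)) (r : ℝ), 0 < r →
          ν (ball x r) ≤ ENNReal.ofReal (C₁ * r ^ ((N : ℝ) - 1))) →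
        ∀ u : EuclideanSpace ℝ (Fin N) → ℝ, ContDiff ℝ (⊤ : ℕ∞) u → HasCompactSupport u →
          ∫⁻ x, ENNReal.ofReal ‖iteratedFDeriv ℝ (m - 1) u x‖ ∂ν ≤
            ENNReal.ofReal (C * C₁ * ∫ x, ‖iteratedFDeriv ℝ m u x‖) := by
  obtain ⟨k, rfl⟩ : ∃ k, m = k + 1 := ⟨m - 1, by omega⟩
  rw [Nat.add_sub_cancel]
  have hfr : Module.finrank ℝ (EuclideanSpace ℝ (Fin N)) = N := by simp
  have hfin : FiniteDimensional ℝ (ContinuousMultilinearMap ℝ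
      (fun _ : Fin k => EuclideanSpace ℝ (Fin N)) ℝ) :=
    FiniteDimensional.of_injective
      (ContinuousMultilinearMap.toMultilinearMapLinear :
        ContinuousMultilinearMap ℝ (fun _ : Fin k => EuclideanSpace ℝ (Fin N)) ℝ →ₗ[ℝ]
          MultilinearMap ℝ (fun _ : Fin k => EuclideanSpace ℝ (Fin N)) ℝ)
      ContinuousMultilinearMap.toMultilinearMap_injective
  obtain ⟨K, hK, hmain⟩ := aux_vector (volume : Measure (EuclideanSpace ℝ (Fin N)))
    (ContinuousMultilinearMap ℝ (fun _ : Fin k => EuclideanSpace ℝ (Fin N)) ℝ) (by omega)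
  rw [hfr] at hmain
  refine ⟨K.toReal + 1, by positivity, ?_⟩
  intro C₁ ν hν u hu hsupp
  have hv : ContDiff ℝ 1 (iteratedFDeriv ℝ k u) := by
    apply hu.iteratedFDeriv_right (m := 1) (i := k)
    exact_mod_cast le_top
  have hvs : HasCompactSupport (iteratedFDeriv ℝ k u) := hsupp.iteratedFDeriv k
  have h := hmain ν (ENNReal.ofReal C₁) (fun x r hr => by
    refine (hν x r hr).trans (le_of_eq ?_)
    have h1 : r ^ ((N:ℝ) - 1) = r ^ (N - 1) := by
      rw [← Real.rpow_natCast, Nat.cast_sub (by omega), Nat.cast_one]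
    rw [h1, mul_comm, ENNReal.ofReal_mul (by positivity), mul_comm]) _ hv hvs
  have hInt : Integrable (fun x => ‖iteratedFDeriv ℝ (k + 1) u x‖) := by
    have hc : Continuous (iteratedFDeriv ℝ (k + 1) u) :=
      hu.continuous_iteratedFDeriv (by exact_mod_cast le_top)
    exact (hc.integrable_of_hasCompactSupport (hsupp.iteratedFDeriv (k + 1))).norm
  have hI : ∫⁻ x, ‖fderiv ℝ (iteratedFDeriv ℝ k u) x‖ₑ =
      ENNReal.ofReal (∫ x, ‖iteratedFDeriv ℝ (k + 1) u x‖) := by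
    rw [ofReal_integral_eq_lintegral_ofReal hInt (Filter.Eventually.of_forall fun x => norm_nonneg _)]
    apply lintegral_congr
    intro x
    rw [← ofReal_norm, norm_fderiv_iteratedFDeriv]
  have hL : ∫⁻ x, ENNReal.ofReal ‖iteratedFDeriv ℝ k u x‖ ∂ν = ∫⁻ x, ‖iteratedFDeriv ℝ k u x‖ₑ ∂ν :=
    lintegral_congr fun x => ofReal_norm _
  rw [hL]
  refine h.trans ?_
  rw [hI]
  set I := ∫ x, ‖iteratedFDeriv ℝ (k + 1) u x‖
  have hI0 : 0 ≤ I := integral_nonneg fun x => norm_nonneg _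
  rw [show (K.toReal + 1) * C₁ * I = (K.toReal + 1) * I * C₁ by ring,
    ENNReal.ofReal_mul (by positivity), ENNReal.ofReal_mul (by positivity)]
  calc ENNReal.ofReal C₁ * K * ENNReal.ofReal I
      = K * ENNReal.ofReal I * ENNReal.ofReal C₁ := by ring
    _ ≤ _ := by
      gcongr
      rw [← ENNReal.ofReal_toReal hK]
      apply ENNReal.ofReal_le_ofReal
      simp
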